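/- Let d be a positive integer. Suppose a : {1,...,p} → ℤ>0 and b : {1,...,q} → ℤ>0 are partitions of d (i.e. a₁ + ⋯ + a_p = d and b₁ + ⋯ + b_q = d), and m₁, m₂ are positive integers with m₁ + m₂ = p + q, m₁ + 1 ≤ d, and m₂ + 1 ≤ d. Then there exist permutations τ₁, τ₂, σ₁, σ₂ in the symmetric group S_d such that: (1) τ₁ τ₂ σ₁ σ₂ = id; (2) the cycle type of τ₁ (as a partition of d, counting each fixed point as a part equal to 1) is (a₁, …, a_p), the cycle type of τ₂ is (b₁, …, b_q), σ₁ is a single cycle of length m₁ + 1, and σ₂ is a single cycle of length m₂ + 1; (3) the subgroup of S_d generated by τ₁, τ₂, σ₁, σ₂ acts transitively on {1, 2, …, d}. -/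

import Mathlib

/-- The cycle type of a permutation of `Fin n`, as a partition of `n`:
the lengths of the cycles in the disjoint cycle decomposition, counting
each fixed point as a part equal to `1`. -/
def fullCycleType {n : ℕ} (σ : Equiv.Perm (Fin n)) : Multiset ℕ :=
  σ.cycleType + Multiset.replicate (n - σ.support.card) 1

/-!
Permutations `α`, `β` of a finite set encode a bipartite map: the points are its edges, the cycles
of `α`, `β` and `α * β` its black vertices, white vertices and faces. Give the edges positive
weights of sum `d` and replace an edge of weight `w` by `w` parallel edges. This creates only
digons, so the new permutations `α'`, `β'` of `d` points have the vertex weights as cycle types,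
while the nontrivial cycles of `α' * β'` are those of `α * β`.

If `β` and `β₂` have the same cycle type, then after a conjugation they are equal, and
`α * α₂⁻¹ = (α * β) * (α₂ * β₂)⁻¹`. It therefore suffices to find a partition `C` of `d` and two
weighted maps, with vertex weights `a`, `C` and `b`, `C`, in which the products of the edge
permutations are cycles of lengths `m₁ + 1` and `m₂ + 1`. By symmetry `p ≤ m₁`.

* If `p < m₁`, take `α₂ = 1` and `β₂` any `(m₂ + 1)`-cycle of `q` edges with weights `b`. It has
  `q - m₂ = m₁ - p` white vertices, so a map with vertex weights `a`, `C`, one face and `m₁ + 1`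
  edges has genus one. Such maps are built by induction, detaching a vertex of least weight.
* If `p = m₁`, take `C = {d - 1, 1}`; both maps are then plane trees.
-/

section

open Equiv Equiv.Perm Finset

variable {X Y ι : Type*}

theorem sameCycle_map {σ : Perm X} {τ : Perm Y} (f : X → Y)
    (hf : ∀ x, τ.SameCycle (f x) (f (σ x))) {x y : X} (h : σ.SameCycle x y) :
    τ.SameCycle (f x) (f y) := by
  obtain ⟨i, rfl⟩ := h
  induction i with
  | zero => exact SameCycle.refl τ _
  | succ i ih =>
    rw [add_comm, zpow_one_add, mul_apply]
    exact ih.trans (hf _)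
  | pred i ih =>
    refine ih.trans ?_
    have hstep := hf ((σ ^ (-(i : ℤ) - 1)) x)
    rw [← mul_apply, ← zpow_one_add, add_sub_cancel] at hstep
    exact hstep.symm

theorem sameCycle_iff_of_retraction {σ : Perm X} {τ : Perm Y} (p : Y → X) (s : X → Y)
    (hp : ∀ u, σ.SameCycle (p u) (p (τ u))) (hs : ∀ x, τ.SameCycle (s x) (s (σ x)))
    (hps : ∀ u, τ.SameCycle u (s (p u))) {u v : Y} :
    τ.SameCycle u v ↔ σ.SameCycle (p u) (p v) :=
  ⟨sameCycle_map p hp, fun h => (hps u).trans ((sameCycle_map s hs h).trans (hps v).symm)⟩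

theorem sameCycle_mul_swap_self [DecidableEq X] {σ : Perm X} {n : X} (hn : σ n = n) (x : X) :
    (σ * swap x n).SameCycle x n :=
  ⟨1, by simp [hn]⟩

theorem sameCycle_mul_swap_of_fixed [DecidableEq X] {σ : Perm X} {n : X} (hn : σ n = n) (x : X)
    {y z : X} (h : σ.SameCycle y z) : (σ * swap x n).SameCycle y z := by
  refine sameCycle_map id (fun u => ?_) h
  by_cases hun : u = n
  · rw [hun, hn]
  by_cases hux : u = x
  · subst hux
    exact (sameCycle_mul_swap_self hn u).trans ⟨1, by simp⟩
  · exact ⟨1, by simp [swap_apply_of_ne_of_ne hux hun]⟩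

theorem sameCycle_sumCongr {σ : Perm X} {τ : Perm Y} {u v : X ⊕ Y} :
    (Perm.sumCongr σ τ).SameCycle u v ↔ Sum.LiftRel σ.SameCycle τ.SameCycle u v := by
  have hpow (i : ℤ) : Perm.sumCongr σ τ ^ i = Perm.sumCongr (σ ^ i) (τ ^ i) :=
    (map_zpow (sumCongrHom X Y) (σ, τ) i).symm
  rcases u with x | x <;> rcases v with y | y <;> simp [SameCycle, hpow]

theorem exists_mem_apply_eq_of_sameCycle {G : Subgroup (Perm X)} {σ : Perm X} (hσ : σ ∈ G) {x y : X}
    (h : σ.SameCycle x y) : ∃ π ∈ G, π x = y := by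
  obtain ⟨i, hi⟩ := h
  exact ⟨σ ^ i, G.zpow_mem hσ i, hi⟩

theorem isCycle_of_forall_sameCycle [Nontrivial X] {σ : Perm X} (h : ∀ x y, σ.SameCycle x y) :
    σ.IsCycle :=
  isCycle_iff_exists_isCycleOn.2 ⟨Set.univ, Set.nontrivial_univ,
    ⟨σ.bijective.bijOn_univ, fun x _ y _ => h x y⟩, fun x _ => Set.mem_univ x⟩

theorem support_eq_univ_of_forall_sameCycle [Nontrivial X] [Fintype X] [DecidableEq X] {σ : Perm X}
    (h : ∀ x y, σ.SameCycle x y) : σ.support = univ := by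
  refine eq_univ_of_forall fun x => mem_support.2 fun hx => ?_
  obtain ⟨y, hy⟩ := exists_ne x
  exact hy ((h x y).eq_of_left hx).symm

theorem exists_isCycle_card_support_eq [Fintype X] [DecidableEq X] {k : ℕ} (hk : 2 ≤ k)
    (hkX : k ≤ Fintype.card X) : ∃ σ : Perm X, σ.IsCycle ∧ #σ.support = k := by
  obtain ⟨σ, hσ⟩ := (exists_with_cycleType_iff (m := {k}) X).2 (by simp [hk, hkX])
  exact ⟨σ, card_cycleType_eq_one.1 (by simp [hσ]), by simp [← sum_cycleType, hσ]⟩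

section CycleWeights

variable [Fintype X] [Fintype Y]

open scoped Classical in
/-- The orbit of `x` under `σ`; unlike the support of `cycleOf`, it is `{x}` if `x` is fixed. -/
noncomputable def cycleFinset (σ : Perm X) (x : X) : Finset X :=
  {y | σ.SameCycle x y}

@[simp]
theorem mem_cycleFinset {σ : Perm X} {x y : X} : y ∈ cycleFinset σ x ↔ σ.SameCycle x y := by
  simp [cycleFinset]

theorem sameCycle_iff_cycleFinset_eq {σ : Perm X} {x y : X} :
    σ.SameCycle x y ↔ cycleFinset σ x = cycleFinset σ y := by
  refine ⟨fun h => ext fun z => ?_, fun h => ?_⟩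
  · simpa using ⟨h.symm.trans, h.trans⟩
  · rw [← mem_cycleFinset, h, mem_cycleFinset]

open scoped Classical in
/-- The multiset of the total weights of the cycles of `σ`, fixed points included, for the weight
function `w`. -/
noncomputable def cycleWeights (σ : Perm X) (w : X → ℕ) : Multiset ℕ :=
  (univ.image (cycleFinset σ)).val.map fun c => ∑ x ∈ c, w x

theorem cycleWeights_eq_map_image [DecidableEq ι] {σ : Perm X} (w : X → ℕ) {f : X → ι}
    (hf : ∀ x y, σ.SameCycle x y ↔ f x = f y) :
    cycleWeights σ w = (univ.image f).val.map fun i => ∑ x with f x = i, w x := by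
  classical
  let fiber (i : ι) : Finset X := {y | f y = i}
  have hfiber : cycleFinset σ = fiber ∘ f := by
    ext x y
    simp [fiber, hf, eq_comm]
  have hinj : Set.InjOn fiber (univ.image f) := by
    intro i hi j _ hij
    obtain ⟨x, -, rfl⟩ := mem_image.1 hi
    have hx : x ∈ fiber j := hij ▸ by simp [fiber]
    simpa [fiber] using hx
  rw [cycleWeights, hfiber, ← image_image, image_val_of_injOn hinj, Multiset.map_map]
  rfl

theorem cycleWeights_eq_map_univ [DecidableEq ι] [Fintype ι] {σ : Perm X} (w : X → ℕ) {f : X → ι}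
    (hsurj : Function.Surjective f) (hf : ∀ x y, σ.SameCycle x y ↔ f x = f y) :
    cycleWeights σ w = univ.val.map fun i => ∑ x with f x = i, w x := by
  rw [cycleWeights_eq_map_image w hf, image_univ_of_surjective hsurj]

theorem sum_cycleWeights (σ : Perm X) (w : X → ℕ) : (cycleWeights σ w).sum = ∑ x, w x := by
  classical
  rw [cycleWeights_eq_map_image w fun x y => sameCycle_iff_cycleFinset_eq]
  exact sum_fiberwise_of_maps_to (fun x _ => mem_image_of_mem _ (mem_univ x)) w

theorem pos_of_mem_cycleWeights {σ : Perm X} {w : X → ℕ} (hw : ∀ x, 0 < w x) {c : ℕ}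
    (hc : c ∈ cycleWeights σ w) : 0 < c := by
  simp only [cycleWeights, Multiset.mem_map, mem_val, mem_image, mem_univ, true_and] at hc
  obtain ⟨_, ⟨x, rfl⟩, rfl⟩ := hc
  exact sum_pos (fun y _ => hw y) ⟨x, mem_cycleFinset.2 (SameCycle.refl σ x)⟩

theorem card_cycleWeights_congr (σ : Perm X) (w w' : X → ℕ) :
    (cycleWeights σ w).card = (cycleWeights σ w').card := by
  simp only [cycleWeights, Multiset.card_map]

theorem cycleWeights_comap [DecidableEq X] {σ : Perm X} {τ : Perm Y} (w : Y → ℕ) {p : Y → X}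
    (hsurj : Function.Surjective p) (hp : ∀ u v, τ.SameCycle u v ↔ σ.SameCycle (p u) (p v)) :
    cycleWeights τ w = cycleWeights σ fun x => ∑ u with p u = x, w u := by
  classical
  have himage : univ.image (fun u => cycleFinset σ (p u)) = univ.image (cycleFinset σ) := by
    ext c
    simp [hsurj.exists]
  rw [cycleWeights_eq_map_image w fun u v => (hp u v).trans sameCycle_iff_cycleFinset_eq, himage,
    cycleWeights_eq_map_image _ fun x y => sameCycle_iff_cycleFinset_eq]
  refine Multiset.map_congr rfl fun c _ => ?_
  rw [← sum_fiberwise_of_maps_to (g := p) (t := {x | cycleFinset σ x = c}) (by simp)]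
  refine sum_congr rfl fun x hx => ?_
  rw [filter_filter]
  refine sum_congr (filter_congr fun u _ => ?_) fun _ _ => rfl
  exact and_iff_right_of_imp fun hu => hu ▸ (mem_filter.1 hx).2

theorem cycleWeights_inv (σ : Perm X) (w : X → ℕ) : cycleWeights σ⁻¹ w = cycleWeights σ w := by
  have h : cycleFinset σ⁻¹ = cycleFinset σ := by
    ext x y
    simp [sameCycle_inv]
  simp only [cycleWeights, h]

theorem cycleWeights_conj (σ π : Perm X) (w : X → ℕ) :
    cycleWeights (π * σ * π⁻¹) w = cycleWeights σ (w ∘ π) := by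
  classical
  rw [cycleWeights_comap w (Equiv.surjective π⁻¹) fun u v => sameCycle_conj]
  congr 1
  ext x
  simp only [inv_eq_iff_eq, sum_filter, sum_ite_eq', mem_univ, if_true, Function.comp_apply]

theorem cycleWeights_one (w : X → ℕ) : cycleWeights 1 w = univ.val.map w := by
  classical
  rw [cycleWeights_eq_map_univ (f := id) w Function.surjective_id fun x y => sameCycle_one]
  simp [sum_filter]

theorem cycleWeights_eq_singleton {σ : Perm X} [Nonempty X] (hσ : ∀ x y, σ.SameCycle x y)
    (w : X → ℕ) : cycleWeights σ w = {∑ x, w x} := by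
  rw [cycleWeights_eq_map_univ (f := fun _ => ()) w (fun _ => ⟨Classical.arbitrary X, rfl⟩)
    (by simpa using hσ)]
  simp

theorem cycleWeights_sumCongr (σ : Perm X) (τ : Perm Y) (w : X → ℕ) (v : Y → ℕ) :
    cycleWeights (Perm.sumCongr σ τ) (Sum.elim w v) = cycleWeights σ w + cycleWeights τ v := by
  classical
  let f : X ⊕ Y → Finset X ⊕ Finset Y := Sum.map (cycleFinset σ) (cycleFinset τ)
  have hf (u u' : X ⊕ Y) : (Perm.sumCongr σ τ).SameCycle u u' ↔ f u = f u' := by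
    rw [sameCycle_sumCongr]
    rcases u with x | x <;> rcases u' with y | y <;> simp [sameCycle_iff_cycleFinset_eq, f]
  have himage : univ.image f =
      (univ.image (cycleFinset σ)).disjSum (univ.image (cycleFinset τ)) := by
    ext (c | c) <;> simp [f]
  rw [cycleWeights_eq_map_image _ hf, himage,
    cycleWeights_eq_map_image w fun x y => sameCycle_iff_cycleFinset_eq,
    cycleWeights_eq_map_image v fun x y => sameCycle_iff_cycleFinset_eq]
  simp [val_disjSum, Multiset.disjSum, sum_filter, f]

theorem exists_cycleWeights_add_single [DecidableEq X] {σ : Perm X} {w : X → ℕ} {c : ℕ}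
    {C : Multiset ℕ} (h : cycleWeights σ w = c ::ₘ C) :
    ∃ x, ∀ k, cycleWeights σ (w + Pi.single x k) = (c + k) ::ₘ C := by
  classical
  have hc : c ∈ cycleWeights σ w := h ▸ Multiset.mem_cons_self c C
  obtain ⟨z, hz, rfl⟩ := Multiset.mem_map.1 hc
  obtain ⟨x, rfl⟩ : ∃ x, cycleFinset σ x = z := by simpa using hz
  rw [cycleWeights, ← Multiset.cons_erase hz, Multiset.map_cons, Multiset.cons_inj_right] at h
  refine ⟨x, fun k => ?_⟩
  rw [cycleWeights, ← Multiset.cons_erase hz, Multiset.map_cons, ← h]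
  congr 1
  · simp [sum_add_distrib, SameCycle.refl]
  · refine Multiset.map_congr rfl fun y hy => sum_congr rfl fun u hu => ?_
    obtain ⟨hne, hy⟩ := (Multiset.Nodup.mem_erase_iff (nodup _)).1 hy
    obtain ⟨v, rfl⟩ : ∃ v, cycleFinset σ v = y := by simpa using hy
    have hux : u ≠ x := by
      rintro rfl
      exact hne (sameCycle_iff_cycleFinset_eq.1 (mem_cycleFinset.1 hu))
    simp [hux]

theorem mem_cycleFactorsFinset_iff_exists_cycleOf [DecidableEq X] {σ c : Perm X} :
    c ∈ σ.cycleFactorsFinset ↔ ∃ x ∈ σ.support, σ.cycleOf x = c := by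
  refine ⟨fun hc => ?_, ?_⟩
  · obtain ⟨x, hx⟩ := (mem_cycleFactorsFinset_iff.1 hc).1.nonempty_support
    exact ⟨x, mem_cycleFactorsFinset_support_le hc hx, (cycle_is_cycleOf hx hc).symm⟩
  · rintro ⟨x, hx, rfl⟩
    exact cycleOf_mem_cycleFactorsFinset_iff.2 hx

theorem parts_partition_eq_cycleWeights [DecidableEq X] (σ : Perm X) :
    σ.partition.parts = cycleWeights σ 1 := by
  let f (x : X) : Perm X ⊕ X :=
    if x ∈ σ.support then Sum.inl (σ.cycleOf x) else Sum.inr x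
  have hf_inl (x c) : f x = Sum.inl c ↔ x ∈ σ.support ∧ σ.cycleOf x = c := by
    simp only [f]; split_ifs with hx <;> simp [hx]
  have hf_inr (x y) : f x = Sum.inr y ↔ x = y ∧ y ∉ σ.support := by
    simp only [f]; split_ifs with hx <;> aesop
  have hf (x y) : σ.SameCycle x y ↔ f x = f y := by
    by_cases hy : y ∈ σ.support
    · rw [(hf_inl y _).2 ⟨hy, rfl⟩, hf_inl]
      exact ⟨fun h => ⟨h.mem_support_iff.2 hy, h.cycleOf_eq⟩, fun ⟨hx, h⟩ =>
        (sameCycle_iff_cycleOf_eq_of_mem_support hx hy).2 h⟩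
    · rw [(hf_inr y y).2 ⟨rfl, hy⟩, hf_inr, and_iff_left hy]
      exact ⟨fun h => h.eq_of_right (notMem_support.1 hy), fun h => h ▸ SameCycle.refl σ x⟩
  have himage : univ.image f = σ.cycleFactorsFinset.disjSum σ.supportᶜ := by
    ext (c | x) <;> simp [hf_inl, hf_inr, mem_cycleFactorsFinset_iff_exists_cycleOf]
  rw [cycleWeights_eq_map_image _ hf, himage, val_disjSum, Multiset.disjSum, Multiset.map_add,
    Multiset.map_map, Multiset.map_map, parts_partition, cycleType_def]
  congr 1
  · refine Multiset.map_congr rfl fun c hc => ?_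
    have hsupp : ({x | f x = Sum.inl c} : Finset X) = c.support := by
      obtain ⟨y, hy, rfl⟩ := mem_cycleFactorsFinset_iff_exists_cycleOf.1 (mem_def.2 hc)
      ext x
      rw [mem_filter_univ, ← (hf_inl y _).2 ⟨hy, rfl⟩, ← hf,
        mem_support_cycleOf_iff' (mem_support.1 hy), sameCycle_comm]
    simp [hsupp]
  · refine (Multiset.eq_replicate.2 ⟨by simp [card_compl], fun b hb => ?_⟩).symm
    obtain ⟨y, hy, rfl⟩ := Multiset.mem_map.1 hb
    have hfix : ({x | f x = Sum.inr y} : Finset X) = {y} := by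
      ext x
      simpa [hf_inr] using fun _ => hy
    simp [hfix]

theorem fullCycleType_eq_parts_partition {d : ℕ} (σ : Perm (Fin d)) :
    fullCycleType σ = σ.partition.parts := by
  rw [fullCycleType, parts_partition, Fintype.card_fin]

theorem isConj_of_fullCycleType_eq {d : ℕ} {σ τ : Perm (Fin d)}
    (h : fullCycleType σ = fullCycleType τ) : IsConj σ τ := by
  rw [fullCycleType_eq_parts_partition, fullCycleType_eq_parts_partition] at h
  exact partition_eq_of_isConj.2 (Nat.Partition.ext h)

theorem fullCycleType_inv {d : ℕ} (σ : Perm (Fin d)) : fullCycleType σ⁻¹ = fullCycleType σ := by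
  rw [fullCycleType, fullCycleType, cycleType_inv, support_inv]

theorem fullCycleType_conj {d : ℕ} (σ π : Perm (Fin d)) :
    fullCycleType (π * σ * π⁻¹) = fullCycleType σ := by
  rw [fullCycleType, fullCycleType, cycleType_conj, card_support_conj]

theorem card_cycleWeights_add_card_support [DecidableEq X] {σ : Perm X}
    (hσ : σ.IsCycle) (w : X → ℕ) :
    (cycleWeights σ w).card + #σ.support = Fintype.card X + 1 := by
  have hle := card_le_univ σ.support
  rw [card_cycleWeights_congr σ w 1, ← parts_partition_eq_cycleWeights, parts_partition,
    hσ.cycleType, Multiset.card_add, Multiset.card_singleton, Multiset.card_replicate]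
  omega

end CycleWeights

section BlowUp

theorem exists_perm_sameCycle_iff [Countable Y] (p : Y → X) :
    ∃ ρ : Perm Y, ∀ u v, ρ.SameCycle u v ↔ p u = p v := by
  have hfiber (x : X) : ∃ f : Perm {u // p u = x}, ∀ u v, f.SameCycle u v := by
    obtain ⟨f, hf, -⟩ := (Set.countable_univ (α := {u // p u = x})).exists_cycleOn
    exact ⟨f, fun u v => hf.2 (Set.mem_univ u) (Set.mem_univ v)⟩
  choose f hf using hfiber
  have happly (x : X) : ∀ z : {u // p u = x}, ofFiberEquiv f z = f x z := by
    rintro ⟨z, rfl⟩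
    rfl
  refine ⟨ofFiberEquiv f, fun u v => ⟨fun h => ?_, fun h => ?_⟩⟩
  · exact sameCycle_one.1 (sameCycle_map p (fun u => sameCycle_one.2 (ofFiberEquiv_map f u).symm) h)
  · refine sameCycle_map (σ := f (p v)) Subtype.val (fun z => ⟨1, happly _ z⟩)
      (hf (p v) ⟨u, h⟩ ⟨v, rfl⟩)

theorem sameCycle_mul_viaEmbedding [Finite Y] {p : Y → X} {s : X ↪ Y}
    (hps : ∀ x, p (s x) = x) {ρ : Perm Y} (hρ : ∀ u v, ρ.SameCycle u v ↔ p u = p v) (σ : Perm X)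
    (u v : Y) : (ρ * σ.viaEmbedding s).SameCycle u v ↔ σ.SameCycle (p u) (p v) := by
  set τ := ρ * σ.viaEmbedding s with hτ
  have hpρ (u : Y) : p (ρ u) = p u := ((hρ _ _).1 ⟨1, rfl⟩).symm
  have hτ_apply (x : X) : τ (s x) = ρ (s (σ x)) := by rw [hτ, mul_apply, viaEmbedding_apply]
  have hτ_of_notMem {u : Y} (hu : u ∉ Set.range s) : τ u = ρ u := by
    rw [hτ, mul_apply, viaEmbedding_apply_of_notMem _ _ _ hu]
  have hsection (n : ℕ) : ∀ u, (ρ ^ n) u = s (p u) → τ.SameCycle u (s (p u)) := by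
    induction n with
    | zero => exact fun u hu => ⟨0, hu⟩
    | succ n ih =>
      intro u hu
      by_cases hmem : u ∈ Set.range s
      · obtain ⟨x, rfl⟩ := hmem
        rw [hps]
      · have hnext := ih (ρ u) (by rw [hpρ, ← hu, pow_succ, mul_apply])
        rwa [hpρ, ← hτ_of_notMem hmem, sameCycle_apply_left] at hnext
  replace hsection (u : Y) : τ.SameCycle u (s (p u)) := by
    obtain ⟨n, hn⟩ := ((hρ u (s (p u))).2 (hps _).symm).exists_nat_pow_eq
    exact hsection n u hn
  refine sameCycle_iff_of_retraction p s (fun u => ?_) (fun x => ?_) hsection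
  · by_cases hmem : u ∈ Set.range s
    · obtain ⟨x, rfl⟩ := hmem
      rw [hτ_apply, hpρ, hps, hps]
      exact ⟨1, rfl⟩
    · rw [hτ_of_notMem hmem, hpρ]
  · have hnext := hsection (τ (s x))
    rwa [hτ_apply, hpρ, hps, ← hτ_apply, sameCycle_apply_left] at hnext

theorem isCycle_viaEmbedding {σ : Perm X} (s : X ↪ Y) (hσ : σ.IsCycle) :
    (σ.viaEmbedding s).IsCycle := by
  classical
  exact hσ.extendDomain _

theorem card_support_viaEmbedding [Fintype X] [DecidableEq X] [Fintype Y] [DecidableEq Y]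
    (σ : Perm X) (s : X ↪ Y) : #(σ.viaEmbedding s).support = #σ.support := by
  classical
  rw [viaEmbedding]
  convert card_support_extend_domain (Equiv.ofInjective s.1 s.2)

theorem exists_fiber_card_eq [Fintype X] [DecidableEq X] {d : ℕ} {w : X → ℕ}
    (hsum : ∑ x, w x = d) : ∃ p : Fin d → X, ∀ x, #{u | p u = x} = w x := by
  have e : Fin d ≃ Σ x, Fin (w x) := Fintype.equivOfCardEq (by simp [hsum])
  refine ⟨fun u => (e u).1, fun x => ?_⟩
  rw [← Fintype.card_subtype, ← Fintype.card_fin (w x)]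
  exact Fintype.card_congr
    ((e.subtypeEquivOfSubtype (p := fun z => z.1 = x)).trans (Equiv.sigmaSubtype x))

/-- Replacing every edge `x` of the map with edge permutations `α`, `β` by `w x` parallel edges adds
only digons to its faces. -/
theorem exists_blowUp [Fintype X] {d : ℕ} {w : X → ℕ} (hw : ∀ x, 0 < w x)
    (hsum : ∑ x, w x = d) (α β : Perm X) :
    ∃ (s : X ↪ Fin d) (α' β' : Perm (Fin d)), α' * β' = (α * β).viaEmbedding s ∧
      fullCycleType α' = cycleWeights α w ∧ fullCycleType β' = cycleWeights β w ∧
      ∀ u, ∃ x, β'.SameCycle u (s x) := by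
  classical
  obtain ⟨p, hp⟩ := exists_fiber_card_eq hsum
  have hsurj : Function.Surjective p := fun x => by
    obtain ⟨u, hu⟩ := card_pos.1 ((hp x).symm ▸ hw x)
    exact ⟨u, (mem_filter.1 hu).2⟩
  let s : X ↪ Fin d := ⟨Function.surjInv hsurj, Function.injective_surjInv hsurj⟩
  have hps (x : X) : p (s x) = x := Function.surjInv_eq hsurj x
  obtain ⟨ρ, hρ⟩ := exists_perm_sameCycle_iff p
  have htype (σ : Perm X) : fullCycleType (ρ * σ.viaEmbedding s) = cycleWeights σ w := by
    rw [fullCycleType_eq_parts_partition, parts_partition_eq_cycleWeights,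
      cycleWeights_comap 1 hsurj (sameCycle_mul_viaEmbedding hps hρ σ)]
    simp [hp]
  have hmul (σ τ : Perm X) : (σ * τ).viaEmbedding s = σ.viaEmbedding s * τ.viaEmbedding s :=
    map_mul (viaEmbeddingHom s) σ τ
  have hinv (σ : Perm X) : (σ⁻¹).viaEmbedding s = (σ.viaEmbedding s)⁻¹ :=
    map_inv (viaEmbeddingHom s) σ
  refine ⟨s, (ρ * α⁻¹.viaEmbedding s)⁻¹, ρ * β.viaEmbedding s, ?_, ?_, htype β, fun u => ⟨p u, ?_⟩⟩
  · rw [hinv, hmul]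
    group
  · rw [fullCycleType_inv, htype, cycleWeights_inv]
  · rw [sameCycle_mul_viaEmbedding hps hρ, hps]

end BlowUp

theorem exists_one_lt_of_card_lt_sum {A : Multiset ℕ} (h : A.card < A.sum) : ∃ a ∈ A, 1 < a := by
  by_contra! hA
  exact h.not_ge (by simpa using Multiset.sum_le_card_nsmul A 1 hA)

theorem eq_replicate_of_sum_le {A : Multiset ℕ} {k : ℕ} (hk : ∀ a ∈ A, k ≤ a)
    (hA : A.sum ≤ A.card * k) : A = Multiset.replicate A.card k := by
  refine Multiset.eq_replicate_card.2 fun a ha => ?_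
  obtain ⟨B, rfl⟩ := Multiset.exists_cons_of_mem ha
  have hB := Multiset.card_nsmul_le_sum fun b hb => hk b (Multiset.mem_cons_of_mem hb)
  have hka := hk a ha
  rw [Multiset.sum_cons, Multiset.card_cons, add_one_mul] at hA
  rw [smul_eq_mul] at hB
  omega

section UnicellularMap

/-- There is a connected bipartite map with one face and `n` weighted edges whose black and white
vertices have weights `A` and `C`. The map is encoded by the permutations `α`, `β` of its edges that
rotate them about their black and white ends; its faces are the cycles of `α * β`. Weights are
positive, and some edge has weight one. -/
def HasUnicellularMap (A C : Multiset ℕ) (n : ℕ) : Prop :=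
  ∃ (X : Type) (_ : Fintype X) (α β : Perm X) (w : X → ℕ), Fintype.card X = n ∧
    (∀ x, 0 < w x) ∧ (∃ e, w e = 1) ∧ (∀ x y, (α * β).SameCycle x y) ∧
    cycleWeights α w = A ∧ cycleWeights β w = C

theorem sameCycle_sumCongr_mul_swap [DecidableEq X] (σ : Perm X) (x : X) (u v : X ⊕ Unit) :
    (Perm.sumCongr σ 1 * swap (Sum.inl x) (Sum.inr ())).SameCycle u v ↔
      σ.SameCycle (Sum.elim id (fun _ => x) u) (Sum.elim id (fun _ => x) v) := by
  have hleaf : Perm.sumCongr σ (1 : Perm Unit) (Sum.inr ()) = Sum.inr () := rfl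
  refine sameCycle_iff_of_retraction _ Sum.inl (fun u => ?_) (fun y => ?_) fun u => ?_
  · rcases u with y | _
    · by_cases hy : y = x
      · simp [hy, SameCycle.refl]
      · simp [swap_apply_of_ne_of_ne, hy, SameCycle.refl]
    · simp [SameCycle.refl]
  · exact sameCycle_mul_swap_of_fixed hleaf _ (sameCycle_sumCongr.2 (Sum.LiftRel.inl ⟨1, rfl⟩))
  · rcases u with y | _
    · rfl
    · exact (sameCycle_mul_swap_self hleaf _).symm

theorem sameCycle_sumCongr_mul_swap_mul_swap [DecidableEq X] {σ : Perm X}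
    (hσ : ∀ x y, σ.SameCycle x y) (x y : X) (u v : X ⊕ Bool) :
    (Perm.sumCongr σ 1 * swap (Sum.inl x) (Sum.inr true) *
      swap (Sum.inl y) (Sum.inr false)).SameCycle u v := by
  have htrue : Perm.sumCongr σ (1 : Perm Bool) (Sum.inr true) = Sum.inr true := rfl
  have hfalse : (Perm.sumCongr σ (1 : Perm Bool) * swap (Sum.inl x) (Sum.inr true))
      (Sum.inr false) = Sum.inr false := by
    simp [swap_apply_of_ne_of_ne]
  have hinl (z : X) : (Perm.sumCongr σ (1 : Perm Bool) * swap (Sum.inl x) (Sum.inr true)).SameCycle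
      (Sum.inl y) (Sum.inl z) :=
    sameCycle_mul_swap_of_fixed htrue _ (sameCycle_sumCongr.2 (Sum.LiftRel.inl (hσ y z)))
  have hroot (u : X ⊕ Bool) : (Perm.sumCongr σ 1 * swap (Sum.inl x) (Sum.inr true) *
      swap (Sum.inl y) (Sum.inr false)).SameCycle (Sum.inl y) u := by
    rcases u with z | _ | _
    · exact sameCycle_mul_swap_of_fixed hfalse _ (hinl z)
    · exact sameCycle_mul_swap_self hfalse _
    · exact sameCycle_mul_swap_of_fixed hfalse _
        ((hinl x).trans (sameCycle_mul_swap_self htrue _))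
  exact (hroot u).symm.trans (hroot v)

namespace HasUnicellularMap

variable {A C : Multiset ℕ} {c k n : ℕ}

theorem symm (h : HasUnicellularMap A C n) : HasUnicellularMap C A n := by
  obtain ⟨X, _, α, β, w, hn, hw, hone, hface, hA, hC⟩ := h
  refine ⟨X, _, β⁻¹, α⁻¹, w, hn, hw, hone, fun x y => ?_, by rwa [cycleWeights_inv],
    by rwa [cycleWeights_inv]⟩
  rw [← mul_inv_rev, sameCycle_inv]
  exact hface x y

theorem attachLeaf (h : HasUnicellularMap A (c ::ₘ C) n) (hk : 0 < k) :
    HasUnicellularMap (k ::ₘ A) ((c + k) ::ₘ C) (n + 1) := by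
  classical
  obtain ⟨X, _, α, β, w, hn, hw, ⟨e, he⟩, hface, hA, hC⟩ := h
  obtain ⟨x, hx⟩ := exists_cycleWeights_add_single hC
  refine ⟨X ⊕ Unit, inferInstance, Perm.sumCongr α 1,
    Perm.sumCongr β 1 * swap (Sum.inl x) (Sum.inr ()), Sum.elim w fun _ => k, by simp [hn],
    by rintro (y | _) <;> simp [hw, hk], ⟨Sum.inl e, he⟩, fun u v => ?_, ?_, ?_⟩
  · rw [← mul_assoc, Perm.sumCongr_mul, mul_one, sameCycle_sumCongr_mul_swap]
    exact hface _ _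
  · rw [cycleWeights_sumCongr, hA, cycleWeights_one, add_comm]
    simp
  · rw [cycleWeights_comap _ (fun y => ⟨Sum.inl y, rfl⟩) (sameCycle_sumCongr_mul_swap β x), ← hx k]
    congr 1
    ext y
    simp only [sum_filter, Fintype.sum_sum_type, Sum.elim_inl, Sum.elim_inr, id_eq, univ_unique,
      sum_const, card_singleton, one_smul, Pi.add_apply, Pi.single_apply, @eq_comm _ x,
      Nat.add_right_cancel_iff]
    exact Fintype.sum_ite_eq' y w

theorem attachDoubleEdge (h : HasUnicellularMap A C n) (hk : 2 ≤ k) :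
    HasUnicellularMap (k ::ₘ A) (k ::ₘ C) (n + 2) := by
  classical
  obtain ⟨X, _, α, β, w, hn, hw, ⟨e, he⟩, hface, hA, hC⟩ := h
  let flip : Perm Bool := swap false true
  -- Exchanging `e` with the new edge of weight one at the white vertices keeps their weights and
  -- joins the new component to the old one.
  let s : Perm (X ⊕ Bool) := swap (Sum.inl e) (Sum.inr false)
  let v : X ⊕ Bool → ℕ := Sum.elim w fun b => if b then k - 1 else 1
  have hflip (w' : Bool → ℕ) : cycleWeights flip w' = {w' true + w' false} := by
    rw [cycleWeights_eq_singleton (by decide), Fintype.sum_bool]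
  have hv (σ : Perm X) : cycleWeights (Perm.sumCongr σ flip) v = k ::ₘ cycleWeights σ w := by
    rw [cycleWeights_sumCongr, hflip, add_comm, Multiset.singleton_add]
    congr 1
    simp only [if_true, Bool.false_eq_true, if_false]
    omega
  have hs : v ∘ s = v := by
    ext u
    by_cases h1 : u = Sum.inl e
    · subst h1; simp [s, v, he]
    by_cases h2 : u = Sum.inr false
    · subst h2; simp [s, v, he]
    simp [s, swap_apply_of_ne_of_ne h1 h2]
  have hsinv : s⁻¹ = s := swap_inv _ _
  have hγ : Perm.sumCongr α flip * (s * Perm.sumCongr β flip * s⁻¹) =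
      Perm.sumCongr (α * β) 1 * swap (Sum.inl (β⁻¹ e)) (Sum.inr true) *
        swap (Sum.inl e) (Sum.inr false) := by
    have hconj := swap_mul_eq_mul_swap (Perm.sumCongr β flip) (Sum.inl e) (Sum.inr false)
    rw [hsinv, hconj, ← mul_assoc, ← mul_assoc, Perm.sumCongr_mul, swap_mul_self]
    rfl
  refine ⟨X ⊕ Bool, inferInstance, Perm.sumCongr α flip, s * Perm.sumCongr β flip * s⁻¹, v,
    by simp [hn], ?_, ⟨Sum.inl e, he⟩, ?_, by rw [hv, hA], by rw [cycleWeights_conj, hs, hv, hC]⟩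
  · rintro (y | _ | _)
    exacts [hw y, one_pos, Nat.sub_pos_of_lt hk]
  · rw [hγ]
    exact sameCycle_sumCongr_mul_swap_mul_swap hface _ _

theorem singleton_singleton (hk : 3 ≤ k) : HasUnicellularMap {k} {k} 3 := by
  let w : Fin 3 → ℕ := ![1, 1, k - 2]
  have hsum : ∑ x, w x = k := by
    simp only [Fin.sum_univ_three, Matrix.cons_val, w]
    omega
  have hrot (x y : Fin 3) : (finRotate 3).SameCycle x y := by decide +revert
  refine ⟨Fin 3, inferInstance, finRotate 3, finRotate 3, w, rfl, ?_, ⟨0, rfl⟩, by decide,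
    by rw [cycleWeights_eq_singleton hrot, hsum], by rw [cycleWeights_eq_singleton hrot, hsum]⟩
  intro x
  fin_cases x
  exacts [one_pos, one_pos, Nat.sub_pos_of_lt hk]

theorem pair_two_four : HasUnicellularMap {2, 2} {4} 4 := by
  refine ⟨Fin 4, inferInstance, Equiv.addRight 2, Equiv.addRight 1, 1, rfl, by simp, ⟨0, rfl⟩,
    by decide, ?_, ?_⟩
  · rw [cycleWeights_eq_map_univ 1 (f := ![(0 : Fin 2), 1, 0, 1]) (by decide) (by decide)]
    decide
  · rw [cycleWeights_eq_singleton (by decide)]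
    rfl

theorem triple_two_pair_three : HasUnicellularMap {2, 2, 2} {3, 3} 6 := by
  refine ⟨Fin 6, inferInstance, Equiv.addRight 3, Equiv.addRight 2, 1, rfl, by simp, ⟨0, rfl⟩,
    by decide, ?_, ?_⟩
  · rw [cycleWeights_eq_map_univ 1 (f := ![(0 : Fin 3), 1, 2, 0, 1, 2]) (by decide) (by decide)]
    decide
  · rw [cycleWeights_eq_map_univ 1 (f := ![(0 : Fin 2), 1, 0, 1, 0, 1]) (by decide) (by decide)]
    decide

theorem singleton_pair (hk : 2 ≤ k) : HasUnicellularMap {k} {k - 1, 1} 2 := by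
  let w : Bool → ℕ := fun b => if b then k - 1 else 1
  refine ⟨Bool, inferInstance, swap false true, 1, w, rfl, ?_, ⟨false, rfl⟩, by decide, ?_, ?_⟩
  · simp only [Bool.forall_bool, w]
    grind
  · rw [cycleWeights_eq_singleton (by decide), Fintype.sum_bool]
    simp only [w]
    grind
  · rw [cycleWeights_one]
    rfl

theorem pair_of_card_lt_sum (hA : ∀ a ∈ A, 0 < a) (hcard : A.card < A.sum) :
    HasUnicellularMap A {A.sum - 1, 1} (A.card + 1) := by
  obtain ⟨k, hk, hk1⟩ := exists_one_lt_of_card_lt_sum hcard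
  obtain ⟨A, rfl⟩ := Multiset.exists_cons_of_mem hk
  replace hA := (Multiset.forall_mem_cons.1 hA).2
  clear hk hcard
  rw [Multiset.sum_cons, Multiset.card_cons]
  induction A using Multiset.induction with
  | empty => exact singleton_pair hk1
  | cons a A ih =>
    rw [Multiset.forall_mem_cons] at hA
    have hleaf := (ih hA.2).attachLeaf hA.1
    rw [Multiset.cons_swap, Multiset.card_cons, Multiset.sum_cons,
      show k + (a + A.sum) - 1 = k + A.sum - 1 + a by omega]
    exact hleaf

end HasUnicellularMap

end UnicellularMap

section ToroidalPassport

/-- A pair of multisets that can be the vertex weights of a unicellular bipartite map of genus one: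
by Euler's formula, such a map has `A.card + C.card + 1` edges, each of weight at least one. -/
structure IsToroidalPassport (A C : Multiset ℕ) : Prop where
  pos_left : ∀ a ∈ A, 0 < a
  pos_right : ∀ c ∈ C, 0 < c
  sum_eq : A.sum = C.sum
  card_add_card_lt : A.card + C.card < A.sum

namespace IsToroidalPassport

variable {A C : Multiset ℕ} {c k : ℕ}

theorem symm (h : IsToroidalPassport A C) : IsToroidalPassport C A :=
  ⟨h.pos_right, h.pos_left, h.sum_eq.symm, by rw [add_comm, ← h.sum_eq]; exact h.card_add_card_lt⟩

theorem exists_one_lt_right (h : IsToroidalPassport A C) : ∃ c ∈ C, 1 < c := by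
  have hcard := h.card_add_card_lt
  rw [h.sum_eq] at hcard
  exact exists_one_lt_of_card_lt_sum (by omega)

theorem removeLeaf (h : IsToroidalPassport (k ::ₘ A) C) (hc : c ∈ C) (hkc : k < c)
    (hcard : A.card + C.card < A.sum) :
    ∃ b B, C = (b + k) ::ₘ B ∧ IsToroidalPassport A (b ::ₘ B) := by
  obtain ⟨B, rfl⟩ := Multiset.exists_cons_of_mem hc
  have hpos := Multiset.forall_mem_cons.1 h.pos_right
  have hsum := h.sum_eq
  rw [Multiset.sum_cons, Multiset.sum_cons] at hsum
  refine ⟨c - k, B, by rw [Nat.sub_add_cancel hkc.le], (Multiset.forall_mem_cons.1 h.pos_left).2,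
    Multiset.forall_mem_cons.2 ⟨by omega, hpos.2⟩, ?_, by simpa using hcard⟩
  rw [Multiset.sum_cons]
  omega

theorem removeDoubleEdge (h : IsToroidalPassport (k ::ₘ A) (k ::ₘ C)) (hk : 2 ≤ k)
    (hA : ∀ a ∈ A, k ≤ a) (hC : ∀ c ∈ C, k ≤ c) (hne : A ≠ 0) : IsToroidalPassport A C := by
  have hsum := h.sum_eq
  have hcard := h.card_add_card_lt
  have hAsum := Multiset.card_nsmul_le_sum hA
  have hCsum := Multiset.card_nsmul_le_sum hC
  have hApos := Multiset.card_pos.2 hne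
  simp only [Multiset.sum_cons, Multiset.card_cons, smul_eq_mul] at hsum hcard hAsum hCsum
  refine ⟨(Multiset.forall_mem_cons.1 h.pos_left).2, (Multiset.forall_mem_cons.1 h.pos_right).2,
    by omega, ?_⟩
  rcases hk.eq_or_lt with rfl | hk
  · omega
  · have hA3 := Nat.mul_le_mul_left A.card hk
    have hC3 := Nat.mul_le_mul_left C.card hk
    omega

theorem ne_zero_of_forall_lt (h : IsToroidalPassport (k ::ₘ A) C) (hC : ∀ c ∈ C, k < c) :
    A ≠ 0 := by
  rintro rfl
  obtain ⟨c, hc, -⟩ := h.exists_one_lt_right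
  have hkc := Multiset.le_sum_of_mem hc
  rw [← h.sum_eq, Multiset.sum_cons, Multiset.sum_zero, add_zero] at hkc
  exact hkc.not_gt (hC c hc)

theorem eq_two_of_sum_le (h : IsToroidalPassport (k ::ₘ A) C) (hA : ∀ a ∈ A, k ≤ a)
    (hC : ∀ c ∈ C, k < c) (hsum : A.sum ≤ A.card + C.card) : k = 2 := by
  have hpos := (Multiset.forall_mem_cons.1 h.pos_left).1
  have heq := h.sum_eq
  have hcard := h.card_add_card_lt
  have hAsum := Multiset.card_nsmul_le_sum hA
  have hCsum := Multiset.card_nsmul_le_sum hC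
  simp only [Multiset.sum_cons, Multiset.card_cons, smul_eq_mul] at heq hcard hAsum hCsum
  have hAcard := Multiset.card_pos.2 (h.ne_zero_of_forall_lt hC)
  have hAk : A.card * k ≤ A.card + C.card := hAsum.trans hsum
  have hCk : C.card * k ≤ A.card + k := by
    rw [Nat.mul_succ] at hCsum
    omega
  have hk3 : k < 3 := by
    by_contra! hk3
    have hAkk := Nat.mul_le_mul_right k hAk
    have hA3 := Nat.mul_le_mul_left (A.card * k) hk3
    nlinarith
  interval_cases k <;> omega

theorem eq_of_sum_le (h : IsToroidalPassport (2 ::ₘ A) C) (hA : ∀ a ∈ A, 2 ≤ a)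
    (hC : ∀ c ∈ C, 2 < c) (hsum : A.sum ≤ A.card + C.card) :
    A = {2} ∧ C = {4} ∨ A = {2, 2} ∧ C = {3, 3} := by
  have heq := h.sum_eq
  have hcard := h.card_add_card_lt
  have hAsum := Multiset.card_nsmul_le_sum hA
  have hCsum := Multiset.card_nsmul_le_sum hC
  simp only [Multiset.sum_cons, Multiset.card_cons, smul_eq_mul] at heq hcard hAsum hCsum
  have hAcard := Multiset.card_pos.2 (h.ne_zero_of_forall_lt hC)
  have hcases : A.card = 1 ∧ C.card = 1 ∧ C.sum = 4 ∨ A.card = 2 ∧ C.card = 2 ∧ C.sum = 6 := by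
    omega
  have hA2 := eq_replicate_of_sum_le hA (by omega)
  rcases hcases with ⟨hAc, hCc, hCs⟩ | ⟨hAc, hCc, hCs⟩
  · left
    obtain ⟨c, rfl⟩ := Multiset.card_eq_one.1 hCc
    rw [hAc] at hA2
    exact ⟨hA2, by rw [← hCs, Multiset.sum_singleton]⟩
  · right
    have hC3 := eq_replicate_of_sum_le hC (by rw [hCs, hCc])
    rw [hAc] at hA2
    rw [hCc] at hC3
    exact ⟨hA2, hC3⟩

theorem exists_reduction (h : IsToroidalPassport (k ::ₘ A) C) (hA : ∀ a ∈ A, k ≤ a)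
    (hC : ∀ c ∈ C, k ≤ c) :
    (∃ c B, C = (c + k) ::ₘ B ∧ IsToroidalPassport A (c ::ₘ B)) ∨
    (∃ B, C = k ::ₘ B ∧ 2 ≤ k ∧ IsToroidalPassport A B) ∨
    (A = 0 ∧ C = {k} ∧ 3 ≤ k) ∨
    k = 2 ∧ (A = {2} ∧ C = {4} ∨ A = {2, 2} ∧ C = {3, 3}) := by
  have hpos := (Multiset.forall_mem_cons.1 h.pos_left).1
  have hcard := h.card_add_card_lt
  have hsum := h.sum_eq
  simp only [Multiset.sum_cons, Multiset.card_cons] at hcard hsum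
  obtain ⟨c, hc, hc1⟩ := h.exists_one_lt_right
  rcases (Nat.succ_le_of_lt hpos).eq_or_lt with rfl | hk
  · exact Or.inl (h.removeLeaf hc hc1 (by omega))
  by_cases hkC : k ∈ C
  · obtain ⟨B, rfl⟩ := Multiset.exists_cons_of_mem hkC
    have hB := (Multiset.forall_mem_cons.1 hC).2
    by_cases hne : A = 0
    · subst hne
      rw [Multiset.sum_cons, Multiset.sum_zero] at hsum
      have hB0 : B.card = 0 := by
        have hBsum := Multiset.card_nsmul_le_sum hB
        rw [smul_eq_mul] at hBsum
        nlinarith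
      rw [Multiset.card_eq_zero] at hB0
      subst hB0
      exact Or.inr (Or.inr (Or.inl ⟨rfl, rfl, Nat.succ_le_of_lt (by simpa using hcard)⟩))
    · exact Or.inr (Or.inl ⟨B, rfl, hk, h.removeDoubleEdge hk hA hB hne⟩)
  · replace hC (b) (hb : b ∈ C) : k < b := (hC b hb).lt_of_ne (by rintro rfl; exact hkC hb)
    rcases lt_or_ge (A.card + C.card) A.sum with hlt | hge
    · exact Or.inl (h.removeLeaf hc (hC c hc) hlt)
    · obtain rfl := h.eq_two_of_sum_le hA hC hge
      exact Or.inr (Or.inr (Or.inr ⟨rfl, h.eq_of_sum_le hA hC hge⟩))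

theorem hasUnicellularMap (h : IsToroidalPassport A C) :
    HasUnicellularMap A C (A.card + C.card + 1) := by
  induction hn : A.card + C.card using Nat.strong_induction_on generalizing A C with
  | _ n ih =>
  obtain ⟨k, hkAC, hk⟩ : ∃ k ∈ A + C, ∀ b ∈ A + C, k ≤ b := by
    obtain ⟨c, hc, -⟩ := h.exists_one_lt_right
    simpa using exists_min_image (A + C).toFinset id ⟨c, by simp [hc]⟩
  wlog hkA : k ∈ A generalizing A C
  · rw [add_comm] at hkAC hk hn
    exact (this h.symm hn hkAC hk ((Multiset.mem_add.1 hkAC).resolve_right hkA)).symm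
  obtain ⟨A, rfl⟩ := Multiset.exists_cons_of_mem hkA
  rcases h.exists_reduction (fun a ha => hk a (by simp [ha])) (fun c hc => hk c (by simp [hc])) with
    ⟨c, B, rfl, hAB⟩ | ⟨B, rfl, hk2, hAB⟩ | ⟨rfl, rfl, hk3⟩ | ⟨rfl, ⟨rfl, rfl⟩ | ⟨rfl, rfl⟩⟩
  · simp only [Multiset.card_cons] at hn ih
    have hk0 := (Multiset.forall_mem_cons.1 h.pos_left).1
    convert (ih _ (by rw [Multiset.card_cons]; omega) hAB rfl).attachLeaf hk0 using 1
    rw [Multiset.card_cons]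
    omega
  · simp only [Multiset.card_cons] at hn ih
    convert (ih _ (by omega) hAB rfl).attachDoubleEdge hk2 using 1
    omega
  · obtain rfl : 2 = n := hn
    exact HasUnicellularMap.singleton_singleton hk3
  · obtain rfl : 3 = n := hn
    exact HasUnicellularMap.pair_two_four
  · obtain rfl : 5 = n := hn
    exact HasUnicellularMap.triple_two_pair_three

end IsToroidalPassport

end ToroidalPassport

section Factorization

variable {d : ℕ}

/-- There are permutations `τ₁`, `τ₂`, `σ₁`, `σ₂` of `Fin d` with product `1` that generate a
transitive group, where `τ₁`, `τ₂` have cycle types `A`, `B` and `σ₁`, `σ₂` are cycles of lengths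
`k₁`, `k₂`. -/
def HasFactorization (d : ℕ) (A B : Multiset ℕ) (k₁ k₂ : ℕ) : Prop :=
  ∃ τ₁ τ₂ σ₁ σ₂ : Perm (Fin d), τ₁ * τ₂ * σ₁ * σ₂ = 1 ∧
    fullCycleType τ₁ = A ∧ fullCycleType τ₂ = B ∧
    σ₁.IsCycle ∧ #σ₁.support = k₁ ∧ σ₂.IsCycle ∧ #σ₂.support = k₂ ∧
    ∀ x y, ∃ π ∈ Subgroup.closure {τ₁, τ₂, σ₁, σ₂}, π x = y

theorem HasFactorization.symm {A B : Multiset ℕ} {k₁ k₂ : ℕ} (h : HasFactorization d A B k₁ k₂) :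
    HasFactorization d B A k₂ k₁ := by
  obtain ⟨τ₁, τ₂, σ₁, σ₂, hmul, hτ₁, hτ₂, hσ₁, hk₁, hσ₂, hk₂, htrans⟩ := h
  have hclosure : Subgroup.closure {τ₂⁻¹, τ₁⁻¹, σ₂⁻¹, σ₁⁻¹} =
      Subgroup.closure {τ₁, τ₂, σ₁, σ₂} := by
    rw [← Subgroup.closure_inv]
    congr 1
    ext π
    simp only [Set.mem_inv, Set.mem_insert_iff, Set.mem_singleton_iff, inv_inj]
    tauto
  refine ⟨τ₂⁻¹, τ₁⁻¹, σ₂⁻¹, σ₁⁻¹, ?_, by rwa [fullCycleType_inv], by rwa [fullCycleType_inv],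
    hσ₂.inv, by rwa [support_inv], hσ₁.inv, by rwa [support_inv], by rwa [hclosure]⟩
  rw [mul_assoc, mul_eq_one_comm] at hmul
  rw [← inv_inj]
  simpa only [mul_inv_rev, inv_inv, inv_one, mul_assoc] using hmul

theorem hasFactorization_of_isCycle_mul {α β α₂ β₂ : Perm (Fin d)}
    (htype : fullCycleType β₂ = fullCycleType β) (hγ : (α * β).IsCycle) (hγ₂ : (α₂ * β₂).IsCycle)
    (hβ : ∀ u, ∃ x ∈ (α * β).support, β.SameCycle u x) :
    HasFactorization d (fullCycleType α) (fullCycleType α₂) #(α * β).support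
      #(α₂ * β₂).support := by
  obtain ⟨π, rfl⟩ := isConj_iff.1 (isConj_of_fullCycleType_eq htype)
  set β := π * β₂ * π⁻¹ with hβ_def
  set γ := α * β with hγ_def
  have hγ₂_conj : γ * (π * (α₂ * β₂) * π⁻¹) * γ⁻¹ = (γ * π) * (α₂ * β₂) * (γ * π)⁻¹ := by group
  refine ⟨α, (π * α₂ * π⁻¹)⁻¹, γ⁻¹, γ * (π * (α₂ * β₂) * π⁻¹) * γ⁻¹, ?_, rfl,
    by rw [fullCycleType_inv, fullCycleType_conj], hγ.inv, by rw [support_inv],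
    by rw [hγ₂_conj]; exact hγ₂.conj, by rw [hγ₂_conj, card_support_conj], fun u v => ?_⟩
  · rw [hγ_def, hβ_def]
    group
  · set G := Subgroup.closure {α, (π * α₂ * π⁻¹)⁻¹, γ⁻¹, γ * (π * (α₂ * β₂) * π⁻¹) * γ⁻¹}
    have hα : α ∈ G := Subgroup.subset_closure (by simp)
    have hγG : γ ∈ G := inv_mem_iff.1 (Subgroup.subset_closure (by simp))
    have hβG : β ∈ G := (G.mul_mem_cancel_left hα).1 hγG
    obtain ⟨x, hx, hux⟩ := hβ u
    obtain ⟨y, hy, hvy⟩ := hβ v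
    obtain ⟨π₁, hπ₁, rfl⟩ := exists_mem_apply_eq_of_sameCycle hβG hux
    obtain ⟨π₂, hπ₂, rfl⟩ := exists_mem_apply_eq_of_sameCycle hγG
      (hγ.sameCycle (mem_support.1 hx) (mem_support.1 hy))
    obtain ⟨π₃, hπ₃, rfl⟩ := exists_mem_apply_eq_of_sameCycle hβG hvy.symm
    exact ⟨π₃ * π₂ * π₁, mul_mem (mul_mem hπ₃ hπ₂) hπ₁, rfl⟩

theorem HasUnicellularMap.hasFactorization [Fintype Y] [DecidableEq Y] {A : Multiset ℕ} {n : ℕ}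
    {α₂ β₂ : Perm Y} {v : Y → ℕ} (h : HasUnicellularMap A (cycleWeights β₂ v) n) (hn : 2 ≤ n)
    (hv : ∀ y, 0 < v y) (hvd : ∑ y, v y = d) (hγ₂ : (α₂ * β₂).IsCycle) :
    HasFactorization d A (cycleWeights α₂ v) n #(α₂ * β₂).support := by
  classical
  obtain ⟨X, _, α, β, w, rfl, hw, -, hface, rfl, hβ⟩ := h
  have : Nontrivial X := Fintype.one_lt_card_iff_nontrivial.1 hn
  have hwd : ∑ x, w x = d := by rw [← hvd, ← sum_cycleWeights β, hβ, sum_cycleWeights]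
  have hsupport := support_eq_univ_of_forall_sameCycle hface
  obtain ⟨s, α', β', hγ', hα', hβ', hs⟩ := exists_blowUp hw hwd α β
  obtain ⟨s₂, α₂', β₂', hγ₂', hα₂', hβ₂', -⟩ := exists_blowUp hv hvd α₂ β₂
  have hfactor := hasFactorization_of_isCycle_mul (α := α') (β := β') (α₂ := α₂') (β₂ := β₂')
    (by rw [hβ₂', hβ', hβ])
    (by rw [hγ']; exact isCycle_viaEmbedding s (isCycle_of_forall_sameCycle hface))
    (by rw [hγ₂']; exact isCycle_viaEmbedding s₂ hγ₂)
    fun u => by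
      obtain ⟨x, hx⟩ := hs u
      refine ⟨s x, ?_, hx⟩
      rw [hγ', mem_support, viaEmbedding_apply, s.injective.ne_iff, ← mem_support, hsupport]
      exact mem_univ x
  rwa [hα', hα₂', hγ', hγ₂', card_support_viaEmbedding, card_support_viaEmbedding, hsupport,
    card_univ] at hfactor

theorem HasUnicellularMap.hasFactorization_of_hasUnicellularMap {A B C : Multiset ℕ} {n₁ n₂ : ℕ}
    (h₁ : HasUnicellularMap A C n₁) (h₂ : HasUnicellularMap B C n₂) (hC : C.sum = d)
    (hn₁ : 2 ≤ n₁) (hn₂ : 2 ≤ n₂) : HasFactorization d A B n₁ n₂ := by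
  classical
  obtain ⟨Y, _, α₂, β₂, v, rfl, hv, -, hface, rfl, rfl⟩ := h₂
  have : Nontrivial Y := Fintype.one_lt_card_iff_nontrivial.1 hn₂
  rw [sum_cycleWeights] at hC
  have hfactor := h₁.hasFactorization hn₁ hv hC (isCycle_of_forall_sameCycle hface)
  rwa [support_eq_univ_of_forall_sameCycle hface] at hfactor

theorem hasFactorization_of_card_lt [Fintype Y] {A : Multiset ℕ} {b : Y → ℕ} {m₁ m₂ : ℕ}
    (hA : ∀ a ∈ A, 0 < a) (hAd : A.sum = d) (hb : ∀ y, 0 < b y) (hbd : ∑ y, b y = d)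
    (hm : m₁ + m₂ = A.card + Fintype.card Y) (hm₂ : 0 < m₂) (hm₁d : m₁ < d) (hlt : A.card < m₁) :
    HasFactorization d A (univ.val.map b) (m₁ + 1) (m₂ + 1) := by
  classical
  obtain ⟨σ, hσ, hσcard⟩ := exists_isCycle_card_support_eq (X := Y) (k := m₂ + 1)
    (by omega) (by omega)
  have hcard := card_cycleWeights_add_card_support hσ b
  have hA_card : A.card + (cycleWeights σ b).card + 1 = m₁ + 1 := by omega
  have hmap : HasUnicellularMap A (cycleWeights σ b) (m₁ + 1) := hA_card ▸
    IsToroidalPassport.hasUnicellularMap ⟨hA, fun c => pos_of_mem_cycleWeights hb,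
      by rw [hAd, sum_cycleWeights, hbd], by omega⟩
  rw [← cycleWeights_one, ← hσcard, ← one_mul σ]
  exact hmap.hasFactorization (by omega) hb hbd (by rwa [one_mul])

theorem hasFactorization_of_card_eq {A B : Multiset ℕ} (hA : ∀ a ∈ A, 0 < a) (hAd : A.sum = d)
    (hB : ∀ b ∈ B, 0 < b) (hBd : B.sum = d) (hAlt : A.card < d) (hBlt : B.card < d) :
    HasFactorization d A B (A.card + 1) (B.card + 1) := by
  have hcard {A : Multiset ℕ} (hAd : A.sum = d) (hAlt : A.card < d) : 2 ≤ A.card + 1 := by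
    rw [← hAd] at hAlt
    obtain ⟨a, ha, -⟩ := exists_one_lt_of_card_lt_sum hAlt
    exact Nat.succ_le_succ (Multiset.card_pos_iff_exists_mem.2 ⟨a, ha⟩)
  have hmapA := HasUnicellularMap.pair_of_card_lt_sum hA (by rwa [hAd])
  have hmapB := HasUnicellularMap.pair_of_card_lt_sum hB (by rwa [hBd])
  rw [hAd] at hmapA
  rw [hBd] at hmapB
  refine hmapA.hasFactorization_of_hasUnicellularMap hmapB ?_ (hcard hAd hAlt) (hcard hBd hBlt)
  rw [Multiset.insert_eq_cons, Multiset.sum_cons, Multiset.sum_singleton]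
  omega

end Factorization

end

/-- Lemma 2.4 (case `ℓ = 2`, `m₁ + m₂ = p + q` of Proposition 1.4):
for a positive integer `d`, partitions `(a₁,…,a_p)`, `(b₁,…,b_q)` of `d`
and positive integers `m₁, m₂` with `m₁ + m₂ = p + q`, `m₁ + 1 ≤ d` and
`m₂ + 1 ≤ d`, there exist permutations `τ₁, τ₂, σ₁, σ₂ ∈ S_d` with
`τ₁ τ₂ σ₁ σ₂ = id`, prescribed cycle types, `σᵢ` an `(mᵢ+1)`-cycle,
generating a transitive subgroup. -/
theorem lem_2_4 (d p q m₁ m₂ : ℕ) (hd : 0 < d) (hp : 0 < p) (hq : 0 < q)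
    (hm₁ : 0 < m₁) (hm₂ : 0 < m₂)
    (a : Fin p → ℕ) (b : Fin q → ℕ)
    (ha : ∀ i, 0 < a i) (hb : ∀ i, 0 < b i)
    (hsa : ∑ i, a i = d) (hsb : ∑ i, b i = d)
    (hsm : m₁ + m₂ = p + q)
    (hm₁d : m₁ + 1 ≤ d) (hm₂d : m₂ + 1 ≤ d) :
    ∃ (τ₁ τ₂ σ₁ σ₂ : Equiv.Perm (Fin d)),
      τ₁ * τ₂ * σ₁ * σ₂ = 1 ∧
      fullCycleType τ₁ = Finset.univ.val.map a ∧
      fullCycleType τ₂ = Finset.univ.val.map b ∧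
      σ₁.IsCycle ∧ σ₁.support.card = m₁ + 1 ∧
      σ₂.IsCycle ∧ σ₂.support.card = m₂ + 1 ∧
      (∀ x y : Fin d,
        ∃ π ∈ Subgroup.closure ({τ₁, τ₂, σ₁, σ₂} : Set (Equiv.Perm (Fin d))),
          π x = y) := by
  have ha' : ∀ k ∈ Finset.univ.val.map a, 0 < k := by simpa using ha
  have hb' : ∀ k ∈ Finset.univ.val.map b, 0 < k := by simpa using hb
  have hpa : (Finset.univ.val.map a).card = p := by simp
  have hqb : (Finset.univ.val.map b).card = q := by simp
  rcases lt_trichotomy p m₁ with hlt | rfl | hgt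
  · exact hasFactorization_of_card_lt ha' hsa hb hsb (by simpa using hsm) hm₂ hm₁d (by rwa [hpa])
  · obtain rfl : m₂ = q := by omega
    have hfactor := hasFactorization_of_card_eq ha' hsa hb' hsb (by rwa [hpa]) (by rwa [hqb])
    rwa [hpa, hqb] at hfactor
  · exact (hasFactorization_of_card_lt hb' hsb ha hsa (by rw [hqb, Fintype.card_fin]; omega)
      hm₁ hm₂d (by rwa [hqb, ← Nat.add_lt_add_iff_left, hsm, Nat.add_lt_add_iff_right])).symm
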